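/- arXiv:2401.07308 — 4 statements merged into one kernel-verified Lean document; each statement's English description precedes it below -/
import Mathlib

section
/- Let AN ⊑ AN' be acyclic nets (AN is a co-initial subnet of AN'). Then: (1) the places of AN are the disjoint union of the initial places of AN' and the postsets (taken in AN') of the transitions of AN, i.e., P_AN = P_AN'^init ⊎ post_AN'(T_AN); and (2) AN = AN' if and only if T_AN = T_AN'. -/
/-- A net: a triple of places, transitions, and a flow relation. -/
structure Net (α : Type*) where
  places : Set α
  transitions : Set α
  flow : α → α → Prop

namespace Net

variable {α : Type*}

/-- The set of direct predecessors (preset) of a node. -/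
def pre (N : Net α) (x : α) : Set α := {z | N.flow z x}

/-- The set of direct successors (postset) of a node. -/
def post (N : Net α) (x : α) : Set α := {z | N.flow x z}

/-- Preset of a set of nodes. -/
def preSet (N : Net α) (X : Set α) : Set α := ⋃ x ∈ X, N.pre x

/-- Postset of a set of nodes. -/
def postSet (N : Net α) (X : Set α) : Set α := ⋃ x ∈ X, N.post x

/-- Initial places: places with empty preset. -/
def initPlaces (N : Net α) : Set α := {p ∈ N.places | N.pre p = ∅}

/-- Final places: places with empty postset. -/
def finPlaces (N : Net α) : Set α := {p ∈ N.places | N.post p = ∅}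

/-- An acyclic net: places and transitions are disjoint finite sets, places nonempty,
the flow relation relates only places to transitions and vice versa, is acyclic, and
every transition has at least one pre-place and one post-place. -/
def IsAcyclicNet (N : Net α) : Prop :=
  N.places.Finite ∧ N.transitions.Finite ∧
  Disjoint N.places N.transitions ∧
  (∀ x y, N.flow x y →
    (x ∈ N.places ∧ y ∈ N.transitions) ∨ (x ∈ N.transitions ∧ y ∈ N.places)) ∧
  N.places.Nonempty ∧
  (∀ x, ¬ Relation.TransGen N.flow x x) ∧
  (∀ t ∈ N.transitions, (N.pre t).Nonempty ∧ (N.post t).Nonempty)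

/-- An occurrence net: an acyclic net with `|pre p| ≤ 1` and `|post p| ≤ 1` for each place. -/
def IsOccurrenceNet (N : Net α) : Prop :=
  IsAcyclicNet N ∧ ∀ p ∈ N.places, (N.pre p).Subsingleton ∧ (N.post p).Subsingleton

/-- A backward deterministic acyclic net: an acyclic net with `|pre p| ≤ 1` for each place. -/
def IsBDAN (N : Net α) : Prop :=
  IsAcyclicNet N ∧ ∀ p ∈ N.places, (N.pre p).Subsingleton

/-- `N` is a subnet of `M`: nonempty set of places included, transitions included,
flow is the restriction of that of `M`, and every transition of `N` retains its
full preset and postset from `M`. -/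
def IsSubnet (N M : Net α) : Prop :=
  N.places.Nonempty ∧ N.places ⊆ M.places ∧ N.transitions ⊆ M.transitions ∧
  (∀ x y, N.flow x y ↔ M.flow x y ∧
    ((x ∈ N.places ∧ y ∈ N.transitions) ∨ (x ∈ N.transitions ∧ y ∈ N.places))) ∧
  (∀ t ∈ N.transitions, N.pre t = M.pre t ∧ N.post t = M.post t)

/-- `N` is a co-initial subnet of `M` : a subnet with the same initial places. -/
def CoInitial (N M : Net α) : Prop := IsSubnet N M ∧ N.initPlaces = M.initPlaces

/-- A step: a nonempty set of transitions with pairwise disjoint presets. -/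
def IsStep (N : Net α) (U : Set α) : Prop :=
  U.Nonempty ∧ U ⊆ N.transitions ∧ ∀ t ∈ U, ∀ u ∈ U, t ≠ u → N.pre t ∩ N.pre u = ∅

/-- A step `U` is enabled at marking `M` if all its pre-places are in `M`. -/
def Enabled (N : Net α) (M U : Set α) : Prop := IsStep N U ∧ N.preSet U ⊆ M

/-- Executing an enabled step `U` at `M` yields `M' = (M ∪ post U) \ pre U`. -/
def StepTrans (N : Net α) (M U M' : Set α) : Prop :=
  Enabled N M U ∧ M' = (M ∪ N.postSet U) \ N.preSet U

/-- Step sequences from a marking to a marking. -/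
inductive StepSeqFrom (N : Net α) : Set α → List (Set α) → Set α → Prop
  | nil (M : Set α) : StepSeqFrom N M [] M
  | cons {M U M' σ M''} : StepTrans N M U M' → StepSeqFrom N M' σ M'' →
      StepSeqFrom N M (U :: σ) M''

/-- The initial marking: the set of initial places. -/
def initMarking (N : Net α) : Set α := N.initPlaces

/-- Step sequences executable from the initial marking. -/
def sseq (N : Net α) : Set (List (Set α)) := {σ | ∃ M, StepSeqFrom N N.initMarking σ M}

/-- Mixed step sequences: alternating steps and resulting markings from a marking. -/
inductive MixFrom (N : Net α) : Set α → List (Set α × Set α) → Prop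
  | nil (M : Set α) : MixFrom N M []
  | cons {M U M' l} : StepTrans N M U M' → MixFrom N M' l → MixFrom N M ((U, M') :: l)

/-- Mixed step sequences from the initial marking, represented as the initial marking
paired with the list of consecutive (step, marking) pairs. -/
def mixsseq (N : Net α) : Set (Set α × List (Set α × Set α)) :=
  {p | p.1 = N.initMarking ∧ MixFrom N p.1 p.2}

/-- Markings reachable from the initial marking. -/
def reach (N : Net α) : Set (Set α) := {M | ∃ σ, StepSeqFrom N N.initMarking σ M}

/-- Firing sequences: step sequences all of whose steps are singletons. -/
def fseq (N : Net α) : Set (List (Set α)) :=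
  {σ | σ ∈ N.sseq ∧ ∀ U ∈ σ, ∃ t, U = {t}}

/-- Maximal step sequences: no step can be appended. -/
def maxsseq (N : Net α) : Set (List (Set α)) :=
  {σ | σ ∈ N.sseq ∧ ¬ ∃ U, σ ++ [U] ∈ N.sseq}

/-- Maximal mixed step sequences: no step and marking can be appended. -/
def maxmixsseq (N : Net α) : Set (Set α × List (Set α × Set α)) :=
  {p | p ∈ N.mixsseq ∧ ¬ ∃ U M, (p.1, p.2 ++ [(U, M)]) ∈ N.mixsseq}

/-- Final reachable markings: markings reached by maximal step sequences. -/
def finreach (N : Net α) : Set (Set α) :=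
  {M | ∃ σ ∈ N.maxsseq, StepSeqFrom N N.initMarking σ M}

/-- A step sequence is well-formed if post-sets of distinct transitions in the same
step are disjoint, and post-sets of distinct steps are disjoint. -/
def WellFormedSeq (N : Net α) (σ : List (Set α)) : Prop :=
  (∀ U ∈ σ, ∀ t ∈ U, ∀ u ∈ U, t ≠ u → N.post t ∩ N.post u = ∅) ∧
  σ.Pairwise (fun U V => N.postSet U ∩ N.postSet V = ∅)

/-- The set of transitions occurring in a step sequence. -/
def transOf (σ : List (Set α)) : Set α := {t | ∃ U ∈ σ, t ∈ U}

/-- A net is well-formed if each transition occurs in at least one step sequence and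
all step sequences are well-formed. -/
def WellFormedNet (N : Net α) : Prop :=
  (∀ t ∈ N.transitions, ∃ σ ∈ N.sseq, t ∈ transOf σ) ∧
  (∀ σ ∈ N.sseq, N.WellFormedSeq σ)

/-- Scenarios of a net: occurrence nets that are co-initial subnets of it. -/
def scenarios (N : Net α) : Set (Net α) :=
  {S | IsOccurrenceNet S ∧ CoInitial S N}

/-- Maximal scenarios: scenarios not strictly included (co-initially) in another scenario. -/
def maxscenarios (N : Net α) : Set (Net α) :=
  {S | S ∈ N.scenarios ∧ ¬ ∃ S', S' ∈ N.scenarios ∧ S' ≠ S ∧ CoInitial S S'}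

/-- The scenario induced by a (well-formed) step sequence `σ`:
transitions are those occurring in `σ`, places are the initial places together with
the postsets of those transitions, and the flow is the restriction. -/
def inducedScenario (N : Net α) (σ : List (Set α)) : Net α where
  places := N.initMarking ∪ N.postSet (transOf σ)
  transitions := transOf σ
  flow := fun x y => N.flow x y ∧
    ((x ∈ N.initMarking ∪ N.postSet (transOf σ) ∧ y ∈ transOf σ) ∨
     (x ∈ transOf σ ∧ y ∈ N.initMarking ∪ N.postSet (transOf σ)))

end Net

/-!
In any bipartite net, a place that is not initial is an output of some transition. A subnet keeps
the full postsets of its transitions, so the transitions of a co-initial subnet determine its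
places, and these together determine its flow.
-/

namespace Net

variable {α : Type*} {N N' : Net α}

/-- The general notion of a Petri net, of which acyclic nets are a special case: places and
transitions are disjoint and the flow relation is bipartite between them. -/
structure IsBipartite (N : Net α) : Prop where
  disjoint : Disjoint N.places N.transitions
  mem_of_flow : ∀ x y, N.flow x y →
    (x ∈ N.places ∧ y ∈ N.transitions) ∨ (x ∈ N.transitions ∧ y ∈ N.places)

theorem IsAcyclicNet.isBipartite (hN : N.IsAcyclicNet) : N.IsBipartite := by
  obtain ⟨-, -, hdisj, hflow, -⟩ := hN
  exact ⟨hdisj, hflow⟩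

theorem mem_postSet {X : Set α} {y : α} : y ∈ N.postSet X ↔ ∃ x ∈ X, N.flow x y := by
  simp only [postSet, post, Set.mem_iUnion, Set.mem_ofPred_eq, exists_prop]

theorem disjoint_initPlaces_postSet (N : Net α) (X : Set α) :
    Disjoint N.initPlaces (N.postSet X) := by
  rw [Set.disjoint_left]
  rintro p ⟨-, hpre⟩ hp
  obtain ⟨x, -, hxp⟩ := mem_postSet.mp hp
  exact Set.eq_empty_iff_forall_notMem.mp hpre x hxp

namespace IsBipartite

theorem mem_transitions_of_flow (hN : N.IsBipartite) {x p : α} (hp : p ∈ N.places)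
    (hxp : N.flow x p) : x ∈ N.transitions := by
  rcases hN.mem_of_flow x p hxp with ⟨-, hp'⟩ | ⟨hx, -⟩
  · exact absurd hp' (hN.disjoint.notMem_of_mem_left hp)
  · exact hx

theorem mem_places_of_flow (hN : N.IsBipartite) {t y : α} (ht : t ∈ N.transitions)
    (hty : N.flow t y) : y ∈ N.places := by
  rcases hN.mem_of_flow t y hty with ⟨ht', -⟩ | ⟨-, hy⟩
  · exact absurd ht (hN.disjoint.notMem_of_mem_left ht')
  · exact hy

theorem places_eq (hN : N.IsBipartite) :
    N.places = N.initPlaces ∪ N.postSet N.transitions := by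
  apply Set.Subset.antisymm
  · intro p hp
    rcases (N.pre p).eq_empty_or_nonempty with hpre | ⟨t, htp⟩
    · exact Or.inl ⟨hp, hpre⟩
    · exact Or.inr (mem_postSet.mpr ⟨t, hN.mem_transitions_of_flow hp htp, htp⟩)
  · rintro p (hp | hp)
    · exact hp.1
    · obtain ⟨t, ht, htp⟩ := mem_postSet.mp hp
      exact hN.mem_places_of_flow ht htp

end IsBipartite

namespace IsSubnet

theorem isBipartite (h : IsSubnet N N') (hN' : N'.IsBipartite) : N.IsBipartite := by
  obtain ⟨-, hplaces, htrans, hflow, -⟩ := h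
  exact ⟨hN'.disjoint.mono hplaces htrans, fun x y hxy => ((hflow x y).mp hxy).2⟩

theorem postSet_eq (h : IsSubnet N N') {X : Set α} (hX : X ⊆ N.transitions) :
    N.postSet X = N'.postSet X := by
  obtain ⟨-, -, -, -, hfull⟩ := h
  exact Set.iUnion₂_congr fun t ht => (hfull t (hX ht)).2

theorem eq_of_places_eq_of_transitions_eq (h : IsSubnet N N')
    (hflow' : ∀ x y, N'.flow x y →
      (x ∈ N'.places ∧ y ∈ N'.transitions) ∨ (x ∈ N'.transitions ∧ y ∈ N'.places))
    (hP : N.places = N'.places) (hT : N.transitions = N'.transitions) : N = N' := by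
  obtain ⟨-, -, -, hrestrict, -⟩ := h
  have hF : N.flow = N'.flow := by
    ext x y
    rw [hrestrict, hP, hT, and_iff_left_of_imp (hflow' x y)]
  cases N
  cases N'
  rw [Net.mk.injEq]
  exact ⟨hP, hT, hF⟩

end IsSubnet

namespace CoInitial

theorem places_eq (h : CoInitial N N') (hN : N.IsBipartite) :
    N.places = N'.initPlaces ∪ N'.postSet N.transitions := by
  obtain ⟨hsub, hinit⟩ := h
  rw [hN.places_eq, hinit, hsub.postSet_eq subset_rfl]

theorem eq_iff_transitions_eq (h : CoInitial N N') (hN' : N'.IsBipartite) :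
    N = N' ↔ N.transitions = N'.transitions := by
  refine ⟨congrArg transitions, fun hT => ?_⟩
  have hP : N.places = N'.places := by
    rw [h.places_eq (h.1.isBipartite hN'), hT, ← hN'.places_eq]
  exact h.1.eq_of_places_eq_of_transitions_eq hN'.mem_of_flow hP hT

end CoInitial

end Net

theorem stmt2_general {α : Type*} (N N' : Net α) (hN' : N'.IsBipartite)
    (h : Net.CoInitial N N') :
    (N.places = N'.initPlaces ∪ N'.postSet N.transitions ∧
      Disjoint N'.initPlaces (N'.postSet N.transitions)) ∧
    (N = N' ↔ N.transitions = N'.transitions) :=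
  ⟨⟨h.places_eq (h.1.isBipartite hN'), N'.disjoint_initPlaces_postSet N.transitions⟩,
    h.eq_iff_transitions_eq hN'⟩

/-- For acyclic nets `AN ⊑ AN'`:
(1) `P_AN = P_AN'^init ⊎ post_AN'(T_AN)`; and (2) `AN = AN'` iff `T_AN = T_AN'`. -/
theorem stmt2 {α : Type*} (N N' : Net α) (hN : N.IsAcyclicNet) (hN' : N'.IsAcyclicNet)
    (h : Net.CoInitial N N') :
    (N.places = N'.initPlaces ∪ N'.postSet N.transitions ∧
      Disjoint N'.initPlaces (N'.postSet N.transitions)) ∧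
    (N = N' ↔ N.transitions = N'.transitions) :=
  stmt2_general N N' hN'.isBipartite h
end

section
/- Let AN ⊑ AN' be acyclic nets (AN a co-initial subnet of AN'). Then the mixed step sequences, step sequences, reachable markings, and firing sequences of AN (from its initial marking) are all included in the corresponding sets for AN': f(AN) ⊆ f(AN') for f = mixsseq, sseq, reach, fseq. -/
/-!
A transition of a subnet keeps its full preset and postset, so executing a step of the subnet at a
given marking has the same effect in the ambient net. A run of the subnet is therefore, step by
step, a run of the ambient net from the same marking, and co-initial nets share their initial
marking.
-/

namespace Net

variable {α : Type*} {N N' : Net α} {M M' U : Set α}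

theorem IsSubnet.preSet_eq (h : N.IsSubnet N') (hU : U ⊆ N.transitions) :
    N.preSet U = N'.preSet U := by
  obtain ⟨-, -, -, -, hprepost⟩ := h
  exact Set.iUnion₂_congr fun t ht => (hprepost t (hU ht)).1

theorem IsSubnet.postSet_eq_s5 (h : N.IsSubnet N') (hU : U ⊆ N.transitions) :
    N.postSet U = N'.postSet U := by
  obtain ⟨-, -, -, -, hprepost⟩ := h
  exact Set.iUnion₂_congr fun t ht => (hprepost t (hU ht)).2

theorem IsStep.mono (h : N.IsSubnet N') (hU : N.IsStep U) : N'.IsStep U := by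
  obtain ⟨-, -, htrans, -, hprepost⟩ := h
  obtain ⟨hne, hsub, hdisj⟩ := hU
  refine ⟨hne, hsub.trans htrans, fun t ht u hu htu => ?_⟩
  rw [← (hprepost t (hsub ht)).1, ← (hprepost u (hsub hu)).1]
  exact hdisj t ht u hu htu

theorem Enabled.mono (h : N.IsSubnet N') (hU : N.Enabled M U) : N'.Enabled M U := by
  obtain ⟨hstep, hpre⟩ := hU
  exact ⟨hstep.mono h, h.preSet_eq hstep.2.1 ▸ hpre⟩

theorem StepTrans.mono (h : N.IsSubnet N') (hs : N.StepTrans M U M') : N'.StepTrans M U M' := by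
  obtain ⟨hen, rfl⟩ := hs
  have hU : U ⊆ N.transitions := hen.1.2.1
  exact ⟨hen.mono h, by rw [h.preSet_eq hU, h.postSet_eq_s5 hU]⟩

theorem StepSeqFrom.mono {σ : List (Set α)} (h : N.IsSubnet N') (hs : N.StepSeqFrom M σ M') :
    N'.StepSeqFrom M σ M' := by
  induction hs with
  | nil M => exact .nil M
  | cons hstep _ ih => exact .cons (hstep.mono h) ih

theorem MixFrom.mono {l : List (Set α × Set α)} (h : N.IsSubnet N') (hs : N.MixFrom M l) :
    N'.MixFrom M l := by
  induction hs with
  | nil M => exact .nil M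
  | cons hstep _ ih => exact .cons (hstep.mono h) ih

theorem CoInitial.initMarking_eq (h : N.CoInitial N') : N.initMarking = N'.initMarking :=
  h.2

theorem CoInitial.mixsseq_subset (h : N.CoInitial N') : N.mixsseq ⊆ N'.mixsseq := by
  rintro p ⟨hinit, hmix⟩
  exact ⟨hinit.trans h.initMarking_eq, hmix.mono h.1⟩

theorem CoInitial.stepSeqFrom_initMarking {σ : List (Set α)} (h : N.CoInitial N')
    (hs : N.StepSeqFrom N.initMarking σ M) : N'.StepSeqFrom N'.initMarking σ M :=
  h.initMarking_eq ▸ hs.mono h.1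

theorem CoInitial.sseq_subset (h : N.CoInitial N') : N.sseq ⊆ N'.sseq := by
  rintro σ ⟨M, hs⟩
  exact ⟨M, h.stepSeqFrom_initMarking hs⟩

theorem CoInitial.reach_subset (h : N.CoInitial N') : N.reach ⊆ N'.reach := by
  rintro M ⟨σ, hs⟩
  exact ⟨σ, h.stepSeqFrom_initMarking hs⟩

theorem CoInitial.fseq_subset (h : N.CoInitial N') : N.fseq ⊆ N'.fseq := by
  rintro σ ⟨hσ, hsingle⟩
  exact ⟨h.sseq_subset hσ, hsingle⟩

end Net

theorem stmt5_general {α : Type*} (N N' : Net α) (h : Net.CoInitial N N') :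
    N.mixsseq ⊆ N'.mixsseq ∧ N.sseq ⊆ N'.sseq ∧ N.reach ⊆ N'.reach ∧ N.fseq ⊆ N'.fseq :=
  ⟨h.mixsseq_subset, h.sseq_subset, h.reach_subset, h.fseq_subset⟩

/-- For acyclic nets `AN ⊑ AN'`, `f(AN) ⊆ f(AN')` for
`f = mixsseq, sseq, reach, fseq`. -/
theorem stmt5 {α : Type*} (N N' : Net α) (hN : N.IsAcyclicNet) (hN' : N'.IsAcyclicNet)
    (h : Net.CoInitial N N') :
    N.mixsseq ⊆ N'.mixsseq ∧ N.sseq ⊆ N'.sseq ∧ N.reach ⊆ N'.reach ∧ N.fseq ⊆ N'.fseq :=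
  stmt5_general N N' h
end

section
/- Let σ = U_1…U_k be a well-formed step sequence of an acyclic net AN, with corresponding mixed step sequence M_0 U_1 M_1 … U_k M_k starting from the initial marking M_0 = P^init, and let T = U_1 ∪ … ∪ U_k. Then: (1) pre(U_i) ∩ post(U_i) = ∅ for every i; (2) pre(U_i) ∩ pre(U_j) = ∅ and U_i ∩ U_j = ∅ for all i < j; (3) M_k = (M_0 ∪ post(T)) \ pre(T); (4) any enumeration of the transitions of the steps, listing the elements of U_1 first, then U_2, etc., is a firing sequence of AN; (5) for all i < j < m, any step enabled at both M_i and M_m is enabled at M_j. -/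
/-!
Every place becomes marked at most once: an initial place is never produced, and no place is
produced by two steps. A place consumed by a step was marked before it, so it is produced neither by
that step nor by a later one. Hence the effects of successive steps do not interfere, and every
marking `M_n` is the result of executing the union `T_n` of the first `n` steps at once. A place
marked both at `M_i` and at `M_m`, where `i < j < m`, has then been produced, and has not yet been
consumed, at `M_j`.
-/

namespace Net

open Set

variable {α : Type*} {N : Net α} {M M' M'' S T U V : Set α} {σ τ : List (Set α)}

section Exec

/-- The marking obtained by executing the set of transitions `U` at `M`. It is defined for all sets
of nodes, so that it also applies to the union of the steps of a sequence, which need not itself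
be an enabled step. -/
def exec (N : Net α) (U M : Set α) : Set α := (M ∪ N.postSet U) \ N.preSet U

lemma preSet_mono (h : U ⊆ V) : N.preSet U ⊆ N.preSet V := biUnion_subset_biUnion_left h

lemma postSet_mono (h : U ⊆ V) : N.postSet U ⊆ N.postSet V := biUnion_subset_biUnion_left h

lemma preSet_union : N.preSet (U ∪ V) = N.preSet U ∪ N.preSet V := biUnion_union U V N.pre

lemma postSet_union : N.postSet (U ∪ V) = N.postSet U ∪ N.postSet V := biUnion_union U V N.post

lemma exec_empty : N.exec ∅ M = M := by
  simp [exec, preSet, postSet]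

lemma exec_exec (h : Disjoint (N.preSet U) (N.postSet V)) :
    N.exec V (N.exec U M) = N.exec (U ∪ V) M := by
  have hQ : N.postSet V \ N.preSet U = N.postSet V := h.symm.sdiff_eq_left
  rw [exec, exec, exec, preSet_union, postSet_union, ← union_assoc, ← sdiff_sdiff,
    union_sdiff_distrib (s := M ∪ N.postSet U), hQ]

lemma exec_inter_exec_subset (hST : S ⊆ T) (hTU : T ⊆ U) :
    N.exec S M ∩ N.exec U M ⊆ N.exec T M :=
  fun _ ⟨hS, hU⟩ =>
    ⟨union_subset_union_right M (postSet_mono hST) hS.1, fun hT => hU.2 (preSet_mono hTU hT)⟩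

lemma disjoint_of_disjoint_preSet (hne : ∀ t ∈ U, (N.pre t).Nonempty)
    (h : Disjoint (N.preSet U) (N.preSet V)) : Disjoint U V := by
  rw [Set.disjoint_left]
  intro t htU htV
  obtain ⟨p, hp⟩ := hne t htU
  exact Set.disjoint_left.1 h (mem_biUnion htU hp) (mem_biUnion htV hp)

end Exec

section StepSeq

lemma transOf_nil : transOf ([] : List (Set α)) = ∅ := by
  simp [transOf]

lemma transOf_cons : transOf (U :: σ) = U ∪ transOf σ := by
  ext t
  simp [transOf]

lemma transOf_mono (h : σ ⊆ τ) : transOf σ ⊆ transOf τ :=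
  fun _ ⟨U, hU, ht⟩ => ⟨U, h hU, ht⟩

lemma subset_transOf (h : U ∈ σ) : U ⊆ transOf σ := fun _ ht => ⟨U, h, ht⟩

lemma StepTrans.subset_union_postSet (h : StepTrans N M U M') : M' ⊆ M ∪ N.postSet U :=
  h.2 ▸ sdiff_subset

lemma StepTrans.disjoint_preSet (h : StepTrans N M U M') : Disjoint (N.preSet U) M' :=
  h.2 ▸ disjoint_sdiff_right

lemma StepSeqFrom.append (h : StepSeqFrom N M σ M') (h' : StepSeqFrom N M' τ M'') :
    StepSeqFrom N M (σ ++ τ) M'' := by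
  induction h with
  | nil => exact h'
  | cons hstep _ ih => exact .cons hstep (ih h')

lemma StepSeqFrom.isStep (h : StepSeqFrom N M σ M') (hU : U ∈ σ) : IsStep N U := by
  induction h with
  | nil => exact absurd hU List.not_mem_nil
  | cons hstep _ ih =>
    rcases List.mem_cons.1 hU with rfl | hU
    exacts [hstep.1.1, ih hU]

lemma StepSeqFrom.preSet_transOf_subset (h : StepSeqFrom N M σ M') :
    N.preSet (transOf σ) ⊆ M ∪ N.postSet (transOf σ) := by
  induction h with
  | nil => simp [transOf_nil, preSet]
  | cons hstep _ ih =>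
    rw [transOf_cons, preSet_union, postSet_union, ← union_assoc]
    exact union_subset
      ((hstep.1.2.trans subset_union_left).trans subset_union_left)
      (ih.trans (union_subset_union_left _ hstep.subset_union_postSet))

lemma MixFrom.stepSeqFrom_take {l : List (Set α × Set α)} (h : MixFrom N M l) :
    ∀ n (hn : n < (M :: l.map Prod.snd).length),
      StepSeqFrom N M ((l.map Prod.fst).take n) (M :: l.map Prod.snd)[n] := by
  induction h with
  | nil M =>
    intro n hn
    obtain rfl : n = 0 := by simpa using hn
    exact .nil M
  | cons hstep _ ih =>
    rintro (_ | n) hn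
    · exact .nil _
    · exact .cons hstep (ih n (Nat.lt_of_succ_lt_succ hn))

lemma MixFrom.stepSeqFrom {l : List (Set α × Set α)} (h : MixFrom N M l) :
    StepSeqFrom N M (l.map Prod.fst)
      ((M :: l.map Prod.snd).getLast (List.cons_ne_nil _ _)) := by
  have hlast := h.stepSeqFrom_take l.length (by simp)
  rw [List.take_of_length_le (List.length_map Prod.fst).le] at hlast
  simpa only [List.getLast_eq_getElem, List.length_cons, List.length_map,
    Nat.add_sub_cancel] using hlast

end StepSeq

section Fresh

/-- A step sequence is fresh from the marking `M` if no place is produced by two of its steps, and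
none of its steps produces a place of `M`. From the initial marking this is the condition that
well-formedness puts on distinct steps; the relative version, with an arbitrary `M`, is preserved by
executing the first step and so supports inductions. -/
def FreshFrom (N : Net α) (M : Set α) (σ : List (Set α)) : Prop :=
  (M :: σ.map N.postSet).Pairwise Disjoint

lemma WellFormedSeq.freshFrom_initMarking (h : N.WellFormedSeq σ) :
    N.FreshFrom N.initMarking σ := by
  refine List.pairwise_cons.2 ⟨List.forall_mem_map.2 fun U _ => ?_, ?_⟩
  · refine Set.disjoint_left.2 fun p hp hpU => ?_
    obtain ⟨t, _, ht⟩ := mem_iUnion₂.1 hpU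
    exact hp.2.subset ht
  · exact List.pairwise_map.2 (h.2.imp Set.disjoint_iff_inter_eq_empty.2)

lemma FreshFrom.sublist (h : N.FreshFrom M τ) (hσ : σ.Sublist τ) : N.FreshFrom M σ :=
  List.Pairwise.sublist ((hσ.map N.postSet).cons_cons M) h

lemma FreshFrom.disjoint_postSet (h : N.FreshFrom M σ) (hU : U ∈ σ) :
    Disjoint M (N.postSet U) :=
  List.rel_of_pairwise_cons h (List.mem_map_of_mem hU)

lemma FreshFrom.disjoint_postSet_transOf (h : N.FreshFrom M σ) :
    Disjoint M (N.postSet (transOf σ)) := by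
  refine Set.disjoint_iUnion₂_right.2 fun t ⟨U, hU, ht⟩ => ?_
  exact (h.disjoint_postSet hU).mono_right (subset_biUnion_of_mem ht)

lemma FreshFrom.of_stepTrans (h : N.FreshFrom M (U :: σ)) (hstep : StepTrans N M U M') :
    N.FreshFrom M' σ := by
  obtain ⟨hM, hU⟩ := List.pairwise_cons.1 h
  refine List.pairwise_cons.2 ⟨fun Q hQ => ?_, hU.of_cons⟩
  exact (disjoint_union_left.2 ⟨hM Q (List.mem_cons_of_mem _ hQ), List.rel_of_pairwise_cons hU hQ⟩)
    |>.mono_left hstep.subset_union_postSet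

lemma FreshFrom.disjoint_preSet_postSet_transOf (h : N.FreshFrom M (U :: σ))
    (hen : N.preSet U ⊆ M) : Disjoint (N.preSet U) (N.postSet (transOf σ)) :=
  h.disjoint_postSet_transOf.mono hen
    (postSet_mono (transOf_mono (List.subset_cons_self U σ)))

lemma StepSeqFrom.eq_exec_transOf (h : StepSeqFrom N M σ M') (hfresh : N.FreshFrom M σ) :
    M' = N.exec (transOf σ) M := by
  induction h with
  | nil M => rw [transOf_nil, exec_empty]
  | @cons M U M₁ σ M' hstep _ ih =>
    calc
      M' = N.exec (transOf σ) M₁ := ih (hfresh.of_stepTrans hstep)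
      _ = N.exec (transOf σ) (N.exec U M) := by rw [hstep.2]; rfl
      _ = N.exec (U ∪ transOf σ) M :=
        exec_exec (hfresh.disjoint_preSet_postSet_transOf hstep.1.2)
      _ = N.exec (transOf (U :: σ)) M := by rw [transOf_cons]

lemma StepSeqFrom.disjoint_preSet_postSet (h : StepSeqFrom N M σ M') (hfresh : N.FreshFrom M σ)
    (hV : V ∈ σ) : Disjoint (N.preSet V) (N.postSet V) := by
  induction h with
  | nil => exact absurd hV List.not_mem_nil
  | cons hstep _ ih =>
    rcases List.mem_cons.1 hV with rfl | hV
    · exact (hfresh.disjoint_postSet List.mem_cons_self).mono_left hstep.1.2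
    · exact ih (hfresh.of_stepTrans hstep) hV

lemma StepSeqFrom.pairwise_disjoint_preSet (h : StepSeqFrom N M σ M')
    (hfresh : N.FreshFrom M σ) : σ.Pairwise fun U V => Disjoint (N.preSet U) (N.preSet V) := by
  induction h with
  | nil => exact .nil
  | @cons M U M₁ σ M' hstep hσ ih =>
    refine .cons (fun V hV => ?_) (ih (hfresh.of_stepTrans hstep))
    have hmarked : Disjoint (N.preSet U) (M₁ ∪ N.postSet (transOf σ)) :=
      disjoint_union_right.2
        ⟨hstep.disjoint_preSet, hfresh.disjoint_preSet_postSet_transOf hstep.1.2⟩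
    exact hmarked.mono_right ((preSet_mono (subset_transOf hV)).trans hσ.preSet_transOf_subset)

lemma MixFrom.getElem_inter_getElem_subset {l : List (Set α × Set α)} (h : MixFrom N M l)
    (hfresh : N.FreshFrom M (l.map Prod.fst)) {i j m : ℕ} (hij : i ≤ j) (hjm : j ≤ m)
    (hm : m < (M :: l.map Prod.snd).length) :
    (M :: l.map Prod.snd)[i] ∩ (M :: l.map Prod.snd)[m] ⊆ (M :: l.map Prod.snd)[j] := by
  have hexec (n : ℕ) (hn : n < (M :: l.map Prod.snd).length) :
      (M :: l.map Prod.snd)[n] = N.exec (transOf ((l.map Prod.fst).take n)) M :=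
    (h.stepSeqFrom_take n hn).eq_exec_transOf (hfresh.sublist (List.take_sublist n _))
  rw [hexec i, hexec j, hexec m]
  exact exec_inter_exec_subset (transOf_mono (List.take_subset_take_left _ hij))
    (transOf_mono (List.take_subset_take_left _ hjm))

end Fresh

section Sequentialization

lemma stepTrans_singleton {t : α} (ht : t ∈ N.transitions) (hM : N.pre t ⊆ M) :
    StepTrans N M {t} (N.exec {t} M) := by
  refine ⟨⟨⟨singleton_nonempty t, singleton_subset_iff.2 ht, ?_⟩, by simpa [preSet] using hM⟩, rfl⟩
  rintro _ rfl _ rfl hne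
  exact absurd rfl hne

lemma stepSeqFrom_map_singleton {l : List α} (htr : ∀ t ∈ l, t ∈ N.transitions)
    (hpre : l.Pairwise fun t u => Disjoint (N.pre t) (N.pre u))
    (hM : N.preSet {t | t ∈ l} ⊆ M)
    (hdisj : Disjoint (N.preSet {t | t ∈ l}) (N.postSet {t | t ∈ l})) :
    StepSeqFrom N M (l.map fun t => {t}) (N.exec {t | t ∈ l} M) := by
  induction l generalizing M with
  | nil => simpa [exec_empty] using StepSeqFrom.nil (N := N) M
  | cons a l ih =>
    have hcons : {t | t ∈ a :: l} = {a} ∪ {t | t ∈ l} := by ext; simp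
    rw [hcons, preSet_union] at hM
    rw [hcons, preSet_union, postSet_union, disjoint_union_left, disjoint_union_right,
      disjoint_union_right] at hdisj
    obtain ⟨⟨-, hal⟩, -, hll⟩ := hdisj
    obtain ⟨hMa, hMl⟩ := union_subset_iff.1 hM
    obtain ⟨ha, hl⟩ := List.pairwise_cons.1 hpre
    have hMl' : N.preSet {t | t ∈ l} ⊆ N.exec {a} M := by
      refine subset_sdiff.2 ⟨hMl.trans subset_union_left, ?_⟩
      simpa [preSet, disjoint_comm] using ha
    rw [hcons, ← exec_exec hal]
    refine .cons (stepTrans_singleton (htr a List.mem_cons_self) (by simpa [preSet] using hMa)) ?_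
    exact ih (fun t ht => htr t (List.mem_cons_of_mem a ht)) hl hMl' hll

lemma StepTrans.stepSeqFrom_map_singleton {l : List α} (h : StepTrans N M {t | t ∈ l} M')
    (hdisj : Disjoint (N.preSet {t | t ∈ l}) (N.postSet {t | t ∈ l})) (hl : l.Nodup) :
    StepSeqFrom N M (l.map fun t => {t}) M' := by
  obtain ⟨⟨⟨_, htr, hpre⟩, hM⟩, rfl⟩ := h
  refine Net.stepSeqFrom_map_singleton htr (hl.pairwise_of_forall_ne fun t ht u hu htu => ?_)
    hM hdisj
  exact Set.disjoint_iff_inter_eq_empty.2 (hpre t ht u hu htu)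

lemma StepSeqFrom.map_singleton_mem_fseq {l : List α}
    (h : StepSeqFrom N N.initMarking (l.map fun t => {t}) M') :
    (l.map fun t => ({t} : Set α)) ∈ N.fseq :=
  ⟨⟨M', h⟩, List.forall_mem_map.2 fun t _ => ⟨t, rfl⟩⟩

lemma StepSeqFrom.flatten_map_singleton (h : StepSeqFrom N M σ M')
    (hdisj : ∀ U ∈ σ, Disjoint (N.preSet U) (N.postSet U)) {ls : List (List α)}
    (hls : List.Forall₂ (fun (l : List α) (U : Set α) => l.Nodup ∧ {t | t ∈ l} = U) ls σ) :
    StepSeqFrom N M (ls.flatten.map fun t => {t}) M' := by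
  induction h generalizing ls with
  | nil M =>
    obtain rfl := List.forall₂_nil_right_iff.1 hls
    exact .nil M
  | cons hstep _ ih =>
    obtain ⟨l, ls', ⟨hl, rfl⟩, hls', rfl⟩ := List.forall₂_cons_right_iff.1 hls
    obtain ⟨hU, hσ⟩ := List.forall_mem_cons.1 hdisj
    rw [List.flatten_cons, List.map_append]
    exact (hstep.stepSeqFrom_map_singleton hU hl).append (ih hσ hls')

end Sequentialization

end Net

theorem stmt7_general {α : Type*} (N : Net α)
    (hpre : ∀ t ∈ N.transitions, (N.pre t).Nonempty) {M : Set α}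
    (mseq : List (Set α × Set α)) (hmix : Net.MixFrom N M mseq)
    (hfresh : N.FreshFrom M (mseq.map Prod.fst)) :
    (∀ U ∈ mseq.map Prod.fst, Disjoint (N.preSet U) (N.postSet U)) ∧
    (mseq.map Prod.fst).Pairwise
      (fun U V => Disjoint (N.preSet U) (N.preSet V) ∧ Disjoint U V) ∧
    ((M :: mseq.map Prod.snd).getLast (List.cons_ne_nil _ _) =
      (M ∪ N.postSet (Net.transOf (mseq.map Prod.fst))) \
        N.preSet (Net.transOf (mseq.map Prod.fst))) ∧
    (∀ ls : List (List α),
      List.Forall₂ (fun (l : List α) (U : Set α) => l.Nodup ∧ {t | t ∈ l} = U)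
        ls (mseq.map Prod.fst) →
      Net.StepSeqFrom N M (ls.flatten.map fun t => ({t} : Set α))
        ((M :: mseq.map Prod.snd).getLast (List.cons_ne_nil _ _))) ∧
    (∀ i j m (hij : i ≤ j) (hjm : j ≤ m) (hm : m < (M :: mseq.map Prod.snd).length),
      (M :: mseq.map Prod.snd)[i] ∩ (M :: mseq.map Prod.snd)[m] ⊆
        (M :: mseq.map Prod.snd)[j]) := by
  have hseq := hmix.stepSeqFrom
  have hself (U) (hU : U ∈ mseq.map Prod.fst) : Disjoint (N.preSet U) (N.postSet U) :=
    hseq.disjoint_preSet_postSet hfresh hU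
  refine ⟨hself, ?_, hseq.eq_exec_transOf hfresh,
    fun ls hls => hseq.flatten_map_singleton hself hls,
    fun _ _ _ hij hjm hm => hmix.getElem_inter_getElem_subset hfresh hij hjm hm⟩
  exact (hseq.pairwise_disjoint_preSet hfresh).imp_of_mem fun hU _ hUV =>
    ⟨hUV, Net.disjoint_of_disjoint_preSet (fun t ht => hpre t ((hseq.isStep hU).2.1 ht)) hUV⟩

/-- Properties of a well-formed step sequence `σ = U_1…U_k` of an acyclic
net, with corresponding mixed step sequence `M_0 U_1 M_1 … U_k M_k` from `M_0 = P^init`. -/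
theorem stmt7 {α : Type*} (N : Net α) (hAN : N.IsAcyclicNet)
    (mseq : List (Set α × Set α))
    (hmix : Net.MixFrom N N.initMarking mseq)
    (hwf : N.WellFormedSeq (mseq.map Prod.fst)) :
    -- (1)
    (∀ U ∈ mseq.map Prod.fst, N.preSet U ∩ N.postSet U = ∅) ∧
    -- (2)
    (mseq.map Prod.fst).Pairwise (fun U V => N.preSet U ∩ N.preSet V = ∅ ∧ U ∩ V = ∅) ∧
    -- (3)
    ((N.initMarking :: mseq.map Prod.snd).getLast (List.cons_ne_nil _ _) =
      (N.initMarking ∪ N.postSet (Net.transOf (mseq.map Prod.fst))) \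
        N.preSet (Net.transOf (mseq.map Prod.fst))) ∧
    -- (4)
    (∀ ls : List (List α),
      List.Forall₂ (fun (l : List α) (U : Set α) => l.Nodup ∧ {t | t ∈ l} = U)
        ls (mseq.map Prod.fst) →
      (ls.flatten.map fun t => ({t} : Set α)) ∈ N.fseq) ∧
    -- (5)
    (∀ i j m (hij : i < j) (hjm : j < m)
        (hm : m < (N.initMarking :: mseq.map Prod.snd).length),
      ∀ U, Net.IsStep N U →
        N.preSet U ⊆ ((N.initMarking :: mseq.map Prod.snd)[i]'(by omega)) →
        N.preSet U ⊆ ((N.initMarking :: mseq.map Prod.snd)[m]'hm) →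
        N.preSet U ⊆ ((N.initMarking :: mseq.map Prod.snd)[j]'(by omega))) := by
  obtain ⟨hself, hpair, hlast, hfire, hbetween⟩ := stmt7_general N
    (fun t ht => (hAN.2.2.2.2.2.2 t ht).1) mseq hmix hwf.freshFrom_initMarking
  simp only [← Set.disjoint_iff_inter_eq_empty]
  exact ⟨hself, hpair, hlast, fun ls hls => (hfire ls hls).map_singleton_mem_fseq,
    fun i j m hij hjm hm _ _ hi hm' =>
      (Set.subset_inter hi hm').trans (hbetween i j m hij.le hjm.le hm)⟩
end

section
/- All step sequences of a backward deterministic acyclic net are well-formed. -/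
/-!
Record the set `F` of transitions fired so far. As long as no transition has fired twice, the
current marking is `(P^init ∪ post F) \ pre F`: initial places are never refilled, and every other
place is filled only by its unique producer. A transition of `F` has a pre-place, which is unmarked,
so it cannot fire again. Hence the steps of a step sequence are pairwise disjoint, and distinct
transitions have disjoint postsets by backward determinism.
-/

namespace Net

variable {α : Type*} {N : Net α} {F U : Set α}

theorem IsAcyclicNet.nonempty_pre (h : N.IsAcyclicNet) {t : α} (ht : t ∈ N.transitions) :
    (N.pre t).Nonempty := by
  obtain ⟨_, _, _, _, _, _, hne⟩ := h
  exact (hne t ht).1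

theorem IsAcyclicNet.post_subset_places (h : N.IsAcyclicNet) {t : α} (ht : t ∈ N.transitions) :
    N.post t ⊆ N.places := by
  obtain ⟨_, _, hdisj, hflow, _⟩ := h
  intro p htp
  rcases hflow t p htp with ⟨htP, _⟩ | ⟨_, hp⟩
  · exact absurd ht (hdisj.notMem_of_mem_left htP)
  · exact hp

theorem IsBDAN.pairwiseDisjoint_post (h : N.IsBDAN) : N.transitions.PairwiseDisjoint N.post := by
  intro t ht u _ htu
  refine Set.disjoint_left.2 fun p htp hup => htu ?_
  exact h.2 p (h.1.post_subset_places ht htp) htp hup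

theorem preSet_union_s9 (N : Net α) (X Y : Set α) :
    N.preSet (X ∪ Y) = N.preSet X ∪ N.preSet Y :=
  Set.biUnion_union X Y N.pre

theorem postSet_union_s9 (N : Net α) (X Y : Set α) :
    N.postSet (X ∪ Y) = N.postSet X ∪ N.postSet Y :=
  Set.biUnion_union X Y N.post

theorem disjoint_initMarking_postSet (N : Net α) (X : Set α) :
    Disjoint N.initMarking (N.postSet X) := by
  refine Set.disjoint_left.2 fun p hp hpX => ?_
  obtain ⟨t, _, htp⟩ := Set.mem_iUnion₂.1 hpX
  exact Set.eq_empty_iff_forall_notMem.1 hp.2 t htp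

theorem disjoint_postSet (hpost : N.transitions.PairwiseDisjoint N.post)
    (hF : F ⊆ N.transitions) (hU : U ⊆ N.transitions) (hFU : Disjoint F U) :
    Disjoint (N.postSet F) (N.postSet U) := by
  simp only [postSet, Set.disjoint_iUnion₂_left, Set.disjoint_iUnion₂_right]
  exact fun u hu t ht => hpost (hF ht) (hU hu) (hFU.ne_of_mem ht hu)

/-- The marking reached from the initial marking once exactly the transitions of `F` have fired,
each of them once, in whatever order. -/
def markingAfter (N : Net α) (F : Set α) : Set α :=
  (N.initMarking ∪ N.postSet F) \ N.preSet F

/-- A causally closed set of transitions: every pre-place of one of them is initial or filled by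
one of them. The sets of transitions fired along a step sequence have this property. -/
structure IsCausallyClosed (N : Net α) (F : Set α) : Prop where
  subset_transitions : F ⊆ N.transitions
  preSet_subset : N.preSet F ⊆ N.initMarking ∪ N.postSet F

theorem markingAfter_empty (N : Net α) : N.markingAfter ∅ = N.initMarking := by
  simp only [markingAfter, preSet, postSet, Set.biUnion_empty, Set.union_empty, Set.sdiff_empty]

theorem isCausallyClosed_empty (N : Net α) : N.IsCausallyClosed ∅ where
  subset_transitions := Set.empty_subset _
  preSet_subset := by simp only [preSet, Set.biUnion_empty, Set.empty_subset]

theorem Enabled.subset_transitions {M : Set α} (hU : N.Enabled M U) : U ⊆ N.transitions :=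
  hU.1.2.1

theorem Enabled.disjoint_of_markingAfter (hpre : ∀ t ∈ N.transitions, (N.pre t).Nonempty)
    (hU : N.Enabled (N.markingAfter F) U) : Disjoint F U := by
  refine Set.disjoint_left.2 fun t htF htU => ?_
  obtain ⟨p, hpt⟩ := hpre t (hU.subset_transitions htU)
  have hp_marked : p ∈ N.markingAfter F := hU.2 (Set.mem_biUnion htU hpt)
  exact hp_marked.2 (Set.mem_biUnion htF hpt)

theorem IsCausallyClosed.union_of_enabled (hF : N.IsCausallyClosed F)
    (hU : N.Enabled (N.markingAfter F) U) : N.IsCausallyClosed (F ∪ U) where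
  subset_transitions := Set.union_subset hF.subset_transitions hU.subset_transitions
  preSet_subset := by
    have hpreU : N.preSet U ⊆ N.initMarking ∪ N.postSet F := hU.2.trans Set.sdiff_subset
    rw [preSet_union_s9, postSet_union_s9, ← Set.union_assoc]
    exact (Set.union_subset hF.preSet_subset hpreU).trans Set.subset_union_left

theorem IsCausallyClosed.disjoint_preSet_postSet
    (hpost : N.transitions.PairwiseDisjoint N.post) (hF : N.IsCausallyClosed F)
    (hU : U ⊆ N.transitions) (hFU : Disjoint F U) : Disjoint (N.preSet F) (N.postSet U) :=
  ((disjoint_initMarking_postSet N U).union_left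
    (disjoint_postSet hpost hF.subset_transitions hU hFU)).mono_left hF.preSet_subset

theorem markingAfter_union (hFU : Disjoint (N.preSet F) (N.postSet U)) :
    N.markingAfter (F ∪ U) = (N.markingAfter F ∪ N.postSet U) \ N.preSet U := by
  calc N.markingAfter (F ∪ U)
      = ((N.initMarking ∪ N.postSet F ∪ N.postSet U) \ N.preSet F) \ N.preSet U := by
        rw [markingAfter, preSet_union_s9, postSet_union_s9, Set.union_assoc, Set.sdiff_sdiff]
    _ = (N.markingAfter F ∪ N.postSet U) \ N.preSet U := by
        rw [Set.union_sdiff_distrib, hFU.sdiff_eq_right, markingAfter]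

theorem StepSeqFrom.subset_transitions {M M' : Set α} {σ : List (Set α)}
    (hσ : N.StepSeqFrom M σ M') : ∀ U ∈ σ, U ⊆ N.transitions := by
  induction hσ with
  | nil => exact List.forall_mem_nil _
  | cons hstep _ ih => exact List.forall_mem_cons.2 ⟨hstep.1.subset_transitions, ih⟩

theorem StepSeqFrom.pairwise_disjoint_cons (hpre : ∀ t ∈ N.transitions, (N.pre t).Nonempty)
    (hpost : N.transitions.PairwiseDisjoint N.post) (hF : N.IsCausallyClosed F)
    {M' : Set α} {σ : List (Set α)} (hσ : N.StepSeqFrom (N.markingAfter F) σ M') :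
    (F :: σ).Pairwise Disjoint := by
  generalize hM : N.markingAfter F = M at hσ
  induction hσ generalizing F with
  | nil => exact List.pairwise_singleton _ _
  | @cons _ U _ σ _ hstep _ ih =>
    subst hM
    obtain ⟨hU, rfl⟩ := hstep
    have hFU : Disjoint F U := hU.disjoint_of_markingAfter hpre
    have hmarking := markingAfter_union
      (hF.disjoint_preSet_postSet hpost hU.subset_transitions hFU)
    obtain ⟨hlater, hσ⟩ := List.pairwise_cons.1 (ih (hF.union_of_enabled hU) hmarking)
    have hFσ : ∀ V ∈ σ, Disjoint F V := fun V hV => (Set.disjoint_union_left.1 (hlater V hV)).1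
    have hUσ : ∀ V ∈ σ, Disjoint U V := fun V hV => (Set.disjoint_union_left.1 (hlater V hV)).2
    exact List.pairwise_cons.2
      ⟨List.forall_mem_cons.2 ⟨hFU, hFσ⟩, List.pairwise_cons.2 ⟨hUσ, hσ⟩⟩

theorem pairwise_disjoint_of_mem_sseq (hpre : ∀ t ∈ N.transitions, (N.pre t).Nonempty)
    (hpost : N.transitions.PairwiseDisjoint N.post) {σ : List (Set α)} (hσ : σ ∈ N.sseq) :
    σ.Pairwise Disjoint := by
  obtain ⟨M, hσ⟩ := hσ
  rw [← markingAfter_empty] at hσ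
  exact (hσ.pairwise_disjoint_cons hpre hpost (isCausallyClosed_empty N)).of_cons

end Net

theorem stmt9_general {α : Type*} (N : Net α) (hpre : ∀ t ∈ N.transitions, (N.pre t).Nonempty)
    (hpost : N.transitions.PairwiseDisjoint N.post) : ∀ σ ∈ N.sseq, N.WellFormedSeq σ := by
  intro σ hσ
  have htrans : ∀ U ∈ σ, U ⊆ N.transitions := by
    obtain ⟨M, hσM⟩ := hσ
    exact hσM.subset_transitions
  refine ⟨fun U hU t ht u hu htu => ?_, ?_⟩
  · exact (hpost (htrans U hU ht) (htrans U hU hu) htu).inter_eq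
  · refine (Net.pairwise_disjoint_of_mem_sseq hpre hpost hσ).imp_of_mem fun hU hV hUV => ?_
    exact (Net.disjoint_postSet hpost (htrans _ hU) (htrans _ hV) hUV).inter_eq

/-- All step sequences of a backward deterministic acyclic net are
well-formed. -/
theorem stmt9 {α : Type*} (N : Net α) (h : N.IsBDAN) :
    ∀ σ ∈ N.sseq, N.WellFormedSeq σ :=
  stmt9_general N (fun _ ht => h.1.nonempty_pre ht) h.pairwiseDisjoint_post
end
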